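/- For all integers r > s ≥ 1 with gcd(r,s) = 1, there does not exist a Fano polygon P with singularity content (0, {5 × 1/r(1,s)}). -/

import Mathlib

/-!
Let `v` be such a pentagon. Each edge cone has determinant `r`, so
`det (v i, v (i-1) + v (i+1)) = 0`, and primitivity gives integers `a i` with
`v (i-1) + v (i+1) = a i • v i` (`exists_mult_of_det2_eq_zero`). Computing
`det (v (i-1), v (i+2))` in two ways yields the frieze relation
`a i * a (i+1) = 1 - a (i+3)` (`frieze_relation`), and strict convexity gives `a i ≤ 1`
(`mult_le_one`) and `0 ≤ a i + a (i+2)` (`mult_add_nonneg`).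
The only integer solutions are the cyclic shifts of `(0, 0, 1, 1, 1)`
(`frieze_classification`), so for some `i`, with `p = v i` and `q = v (i+1)`, the vertices are
`p, q, -p, -p-q, -q`.

A cone of type `1/r(1,s)` on `(u, w)` satisfies `w + s u ∈ rℤ²` or `u + s w ∈ rℤ²`
(`ConeCong`). Imposed on the cones `(p, q)`, `(-p, -p-q)`, `(-p-q, -q)`, this forces `r` to divide
both `s² - s - 1` and `s² + s - 1`, hence `2s`, hence `2`. So `r = 2` and `s = 1`, which is not
an R-cone.
-/

/-- det(u,v) = u₁v₂ − u₂v₁ for u, v ∈ ℤ². -/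
def det2 (u v : ℤ × ℤ) : ℤ := u.1 * v.2 - u.2 * v.1

/-- A vector of ℤ² is primitive if the gcd of its two coordinates is 1. -/
def IsPrimitive (u : ℤ × ℤ) : Prop := Int.gcd u.1 u.2 = 1

/-- `v : ZMod k → ℤ × ℤ` lists, in counterclockwise cyclic order, the vertices of a
Fano polygon: a convex lattice polygon (so k ≥ 3 and the points are in strictly
convex position, every other vertex lying strictly to the left of each directed
edge v_i → v_{i+1}) whose vertices are primitive and whose interior contains the
origin (the origin lies strictly to the left of each directed edge, which is
exactly 0 < det(v_i, v_{i+1})). -/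
def IsFanoCCW {k : ℕ} (v : ZMod k → ℤ × ℤ) : Prop :=
  3 ≤ k ∧ (∀ i, IsPrimitive (v i)) ∧ (∀ i, 0 < det2 (v i) (v (i + 1))) ∧
    ∀ i j : ZMod k, j ≠ i → j ≠ i + 1 → 0 < det2 (v (i + 1) - v i) (v j - v i)

/-- The action of an integer 2×2 matrix on ℤ². -/
def mApply (M : Matrix (Fin 2) (Fin 2) ℤ) (u : ℤ × ℤ) : ℤ × ℤ :=
  (M 0 0 * u.1 + M 0 1 * u.2, M 1 0 * u.1 + M 1 1 * u.2)

/-- A Fano polygon with vertices `v : ZMod k → ℤ × ℤ` has singularity content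
(0, {k × 1/r(1,s)}): the cone spanned by (0,1) and (r,−s) is an R-cone
(its lattice length gcd(r, s+1) satisfies gcd(r, s+1)² < r), and every edge cone,
i.e. every pair of adjacent vertices, is mapped by some M ∈ GL₂(ℤ) onto
{(0,1), (r,−s)}. -/
def HasSingContent (r s : ℤ) {k : ℕ} (v : ZMod k → ℤ × ℤ) : Prop :=
  ((Int.gcd r (s + 1) : ℤ)) ^ 2 < r ∧
    ∀ i : ZMod k, ∃ M : Matrix (Fin 2) (Fin 2) ℤ, IsUnit M.det ∧
      ({mApply M (v i), mApply M (v (i + 1))} : Set (ℤ × ℤ)) = {(0, 1), (r, -s)}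

/-- The congruence satisfied by a cone of type `1/r(1,s)`, one orientation:
`w + s u ∈ rℤ²`. -/
def HalfCong (r s : ℤ) (u w : ℤ × ℤ) : Prop :=
  r ∣ w.1 + s * u.1 ∧ r ∣ w.2 + s * u.2

/-- `HalfCong` for the unordered pair `{u, w}`. -/
def ConeCong (r s : ℤ) (u w : ℤ × ℤ) : Prop :=
  HalfCong r s u w ∨ HalfCong r s w u

lemma det2_mApply (M : Matrix (Fin 2) (Fin 2) ℤ) (u w : ℤ × ℤ) :
    det2 (mApply M u) (mApply M w) = M.det * det2 u w := by
  simp only [det2, mApply, Matrix.det_fin_two]; ring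

lemma halfCong_of_matrix {r s : ℤ} {M : Matrix (Fin 2) (Fin 2) ℤ} (hM : IsUnit M.det)
    {u w : ℤ × ℤ} (hu : mApply M u = (0, 1)) (hw : mApply M w = (r, -s)) :
    HalfCong r s u w := by
  obtain ⟨d, hd⟩ := hM.exists_left_inv
  rw [Matrix.det_fin_two] at hd
  simp only [mApply, Prod.mk.injEq] at hu hw
  obtain ⟨hu1, hu2⟩ := hu
  obtain ⟨hw1, hw2⟩ := hw
  -- `M (w + s u) = (r, 0)`; apply the inverse matrix `d * adj M`.
  constructor
  · refine ⟨d * M 1 1, ?_⟩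
    linear_combination -(w.1 + s * u.1) * hd + d * M 1 1 * (hw1 + s * hu1) -
      d * M 0 1 * (hw2 + s * hu2)
  · refine ⟨-(d * M 1 0), ?_⟩
    linear_combination -(w.2 + s * u.2) * hd - d * M 1 0 * (hw1 + s * hu1) +
      d * M 0 0 * (hw2 + s * hu2)

lemma det2_and_coneCong {r s : ℤ} (hr : 0 < r) {u w : ℤ × ℤ} (hpos : 0 < det2 u w)
    (h : ∃ M : Matrix (Fin 2) (Fin 2) ℤ, IsUnit M.det ∧
      ({mApply M u, mApply M w} : Set (ℤ × ℤ)) = {(0, 1), (r, -s)}) :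
    det2 u w = r ∧ ConeCong r s u w := by
  obtain ⟨M, hM, hset⟩ := h
  have hdet := det2_mApply M u w
  rcases Set.pair_eq_pair_iff.1 hset with ⟨hu, hw⟩ | ⟨hu, hw⟩
  · refine ⟨?_, Or.inl (halfCong_of_matrix hM hu hw)⟩
    rw [hu, hw] at hdet
    rcases Int.isUnit_iff.1 hM with h1 | h1 <;> rw [h1] at hdet <;>
      simp only [det2] at hdet hpos ⊢ <;> linarith
  · refine ⟨?_, Or.inr (halfCong_of_matrix hM hw hu)⟩
    rw [hu, hw] at hdet
    rcases Int.isUnit_iff.1 hM with h1 | h1 <;> rw [h1] at hdet <;>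
      simp only [det2] at hdet hpos ⊢ <;> linarith

lemma exists_mult_of_det2_eq_zero {u x : ℤ × ℤ} (hu : IsPrimitive u) (h : det2 u x = 0) :
    ∃ a : ℤ, x.1 = a * u.1 ∧ x.2 = a * u.2 := by
  have hb := Int.gcd_eq_gcd_ab u.1 u.2
  rw [show Int.gcd u.1 u.2 = 1 from hu] at hb
  push_cast at hb
  simp only [det2] at h
  refine ⟨x.1 * Int.gcdA u.1 u.2 + x.2 * Int.gcdB u.1 u.2, ?_, ?_⟩
  · linear_combination x.1 * hb - Int.gcdB u.1 u.2 * h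
  · linear_combination x.2 * hb + Int.gcdA u.1 u.2 * h

lemma dvd_of_dvd_mul_primitive {r c : ℤ} {u : ℤ × ℤ} (hu : IsPrimitive u)
    (h1 : r ∣ c * u.1) (h2 : r ∣ c * u.2) : r ∣ c := by
  have hb := Int.gcd_eq_gcd_ab u.1 u.2
  rw [show Int.gcd u.1 u.2 = 1 from hu] at hb
  push_cast at hb
  have h := dvd_add (h1.mul_right (Int.gcdA u.1 u.2)) (h2.mul_right (Int.gcdB u.1 u.2))
  exact h.trans (dvd_of_eq (by linear_combination -c * hb))

/-- Consecutive vertices `x, y, z, t, w` (indices `i-1, …, i+3`, so that `w` is also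
adjacent to `x`); `a, b, c` are the multiplicities at `y`, `z` and `w`. -/
lemma frieze_relation {r a b c : ℤ} {x y z t w : ℤ × ℤ} (hr : 0 < r)
    (hyz : det2 y z = r) (hwx : det2 w x = r)
    (hy : x.1 + z.1 = a * y.1 ∧ x.2 + z.2 = a * y.2)
    (hz : y.1 + t.1 = b * z.1 ∧ y.2 + t.2 = b * z.2)
    (hw : t.1 + x.1 = c * w.1 ∧ t.2 + x.2 = c * w.2) :
    a * b = 1 - c := by
  obtain ⟨hy1, hy2⟩ := hy
  obtain ⟨hz1, hz2⟩ := hz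
  obtain ⟨hw1, hw2⟩ := hw
  simp only [det2] at hyz hwx
  have e1 : x.1 * t.2 - x.2 * t.1 = (a * b - 1) * r := by
    rw [show x.1 = a * y.1 - z.1 by linarith, show x.2 = a * y.2 - z.2 by linarith,
      show t.1 = b * z.1 - y.1 by linarith, show t.2 = b * z.2 - y.2 by linarith]
    linear_combination (a * b - 1) * hyz
  have e2 : x.1 * t.2 - x.2 * t.1 = -c * r := by
    rw [show t.1 = c * w.1 - x.1 by linarith, show t.2 = c * w.2 - x.2 by linarith]
    linear_combination -c * hwx
  have : (a * b - 1) = -c := mul_right_cancel₀ hr.ne' (e1.symm.trans e2)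
  linarith

lemma mult_le_one {r a : ℤ} {x y z : ℤ × ℤ} (hr : 0 < r)
    (hxy : det2 x y = r)
    (hy : x.1 + z.1 = a * y.1 ∧ x.2 + z.2 = a * y.2)
    (hconv : 0 < det2 (y - x) (z - x)) : a ≤ 1 := by
  obtain ⟨hy1, hy2⟩ := hy
  simp only [det2, Prod.fst_sub, Prod.snd_sub] at hxy hconv
  have : 0 < r * (2 - a) := by
    convert hconv using 1
    rw [show z.1 = a * y.1 - x.1 by linarith, show z.2 = a * y.2 - x.2 by linarith]
    linear_combination (a - 2) * hxy
  have := pos_of_mul_pos_right this hr.le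
  omega

/-- The edge `(y, z)` sees the opposite vertex `w`, where `x, y, z, t, w` are the
vertices in order; `b` and `c` are the multiplicities at the two other vertices `t` and `x`. -/
lemma mult_add_nonneg {r b c : ℤ} {x y z t w : ℤ × ℤ} (hr : 0 < r)
    (hxy : det2 x y = r) (hyz : det2 y z = r) (hzt : det2 z t = r)
    (ht : z.1 + w.1 = b * t.1 ∧ z.2 + w.2 = b * t.2)
    (hx : w.1 + y.1 = c * x.1 ∧ w.2 + y.2 = c * x.2)
    (hconv : 0 < det2 (z - y) (w - y)) : 0 ≤ b + c := by
  obtain ⟨ht1, ht2⟩ := ht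
  obtain ⟨hx1, hx2⟩ := hx
  simp only [det2, Prod.fst_sub, Prod.snd_sub] at hxy hyz hzt hconv
  have e1 : z.1 * w.2 - z.2 * w.1 = b * r := by
    rw [show w.1 = b * t.1 - z.1 by linarith, show w.2 = b * t.2 - z.2 by linarith]
    linear_combination b * hzt
  have e2 : w.1 * y.2 - w.2 * y.1 = c * r := by
    rw [show w.1 = c * x.1 - y.1 by linarith, show w.2 = c * x.2 - y.2 by linarith]
    linear_combination c * hxy
  have : 0 < r * (b + c + 1) := by
    linarith
  have := pos_of_mul_pos_right this hr.le
  omega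

lemma frieze_classification {a b c d e : ℤ}
    (ha : a ≤ 1) (hb : b ≤ 1) (hc : c ≤ 1) (hd : d ≤ 1) (he : e ≤ 1)
    (hac : 0 ≤ a + c) (hbd : 0 ≤ b + d) (hce : 0 ≤ c + e) (hda : 0 ≤ d + a) (heb : 0 ≤ e + b)
    (h1 : a * b = 1 - d) (h2 : b * c = 1 - e) (h3 : c * d = 1 - a) (h4 : d * e = 1 - b)
    (h5 : e * a = 1 - c) :
    (a = 0 ∧ b = 0 ∧ c = 1) ∨ (b = 0 ∧ c = 0 ∧ d = 1) ∨ (c = 0 ∧ d = 0 ∧ e = 1) ∨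
      (d = 0 ∧ e = 0 ∧ a = 1) ∨ (e = 0 ∧ a = 0 ∧ b = 1) := by
  have ha' : -1 ≤ a := by omega
  have hb' : -1 ≤ b := by omega
  interval_cases a <;> interval_cases b <;> omega

/-- If `q ≡ -s p` mod `r`, the cones `(p, p+q)` and `(p+q, q)` cannot both have type
`1/r(1,s)` unless `r ∣ 2`. -/
lemma dvd_two_of_halfCong {r s : ℤ} {p q : ℤ × ℤ} (hp : IsPrimitive p)
    (hr : ¬ r ∣ 1) (hrs : IsCoprime r s) (hpq : HalfCong r s p q)
    (h1 : ConeCong r s p (p + q)) (h2 : ConeCong r s (p + q) q) : r ∣ 2 := by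
  obtain ⟨k1, k2⟩ := hpq
  -- A combination of the congruences of the form `c p ≡ 0` forces `r ∣ c`.
  have d1 : r ∣ s ^ 2 - s - 1 := by
    rcases h1 with ⟨m1, m2⟩ | ⟨m1, m2⟩ <;>
      simp only [Prod.fst_add, Prod.snd_add] at m1 m2
    · refine absurd (dvd_of_dvd_mul_primitive hp ?_ ?_) hr
      · exact (dvd_sub m1 k1).trans (dvd_of_eq (by ring))
      · exact (dvd_sub m2 k2).trans (dvd_of_eq (by ring))
    · refine dvd_of_dvd_mul_primitive hp ?_ ?_
      · exact (dvd_sub (k1.mul_left s) m1).trans (dvd_of_eq (by ring))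
      · exact (dvd_sub (k2.mul_left s) m2).trans (dvd_of_eq (by ring))
  have d2 : r ∣ s ^ 2 + s - 1 := by
    rcases h2 with ⟨m1, m2⟩ | ⟨m1, m2⟩ <;>
      simp only [Prod.fst_add, Prod.snd_add] at m1 m2
    · have : r ∣ s * s := by
        refine dvd_of_dvd_mul_primitive hp ?_ ?_
        · exact (dvd_sub (k1.mul_left (s + 1)) m1).trans (dvd_of_eq (by ring))
        · exact (dvd_sub (k2.mul_left (s + 1)) m2).trans (dvd_of_eq (by ring))
      exact absurd (hrs.dvd_of_dvd_mul_left (by simpa using hrs.dvd_of_dvd_mul_left this)) hr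
    · refine dvd_of_dvd_mul_primitive hp ?_ ?_
      · exact (dvd_sub (k1.mul_left (s + 1)) m1).trans (dvd_of_eq (by ring))
      · exact (dvd_sub (k2.mul_left (s + 1)) m2).trans (dvd_of_eq (by ring))
  have : r ∣ s * 2 := by
    exact (dvd_sub d2 d1).trans (dvd_of_eq (by ring))
  exact hrs.dvd_of_dvd_mul_left this

lemma HalfCong.of_neg {r s : ℤ} {u w : ℤ × ℤ} (h : HalfCong r s (-u) (-w)) :
    HalfCong r s u w := by
  obtain ⟨h1, h2⟩ := h
  simp only [Prod.fst_neg, Prod.snd_neg] at h1 h2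
  constructor
  · exact (dvd_neg.2 h1).trans (dvd_of_eq (by ring))
  · exact (dvd_neg.2 h2).trans (dvd_of_eq (by ring))

lemma ConeCong.of_neg {r s : ℤ} {u w : ℤ × ℤ} (h : ConeCong r s (-u) (-w)) :
    ConeCong r s u w :=
  h.imp HalfCong.of_neg HalfCong.of_neg

/-- Five consecutive vertices `w, p, q, x, y` with multiplicities `0, 0, 1` at `p, q, x`. -/
lemma false_of_mults {r s : ℤ} (hs : 1 ≤ s) (hsr : s < r) (hgcd : Int.gcd r s = 1)
    (hR : ((Int.gcd r (s + 1) : ℤ)) ^ 2 < r) {w p q x y : ℤ × ℤ} {a b c : ℤ}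
    (hp : IsPrimitive p) (hq : IsPrimitive q)
    (ha : w.1 + q.1 = a * p.1 ∧ w.2 + q.2 = a * p.2)
    (hb : p.1 + x.1 = b * q.1 ∧ p.2 + x.2 = b * q.2)
    (hc : q.1 + y.1 = c * x.1 ∧ q.2 + y.2 = c * x.2)
    (habc : a = 0 ∧ b = 0 ∧ c = 1)
    (h1 : ConeCong r s p q) (h2 : ConeCong r s x y) (h3 : ConeCong r s y w) : False := by
  obtain ⟨rfl, rfl, rfl⟩ := habc
  have hw : w = -q := by ext <;> simp <;> linarith
  have hx : x = -p := by ext <;> simp <;> linarith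
  have hy : y = -(p + q) := by subst hx; ext <;> simp at hc ⊢ <;> linarith
  subst hw hx hy
  have h2 := h2.of_neg
  have h3 := h3.of_neg
  have hr1 : ¬ r ∣ 1 := fun h => by
    have := Int.le_of_dvd one_pos h; omega
  have hrs : IsCoprime r s := Int.isCoprime_iff_gcd_eq_one.2 hgcd
  have hr2 : r ∣ 2 := by
    rcases h1 with h1 | h1
    · exact dvd_two_of_halfCong hp hr1 hrs h1 h2 h3
    · refine dvd_two_of_halfCong hq hr1 hrs h1 ?_ ?_
      · rw [add_comm]; exact h3.symm
      · rw [add_comm]; exact h2.symm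
  have := Int.le_of_dvd two_pos hr2
  obtain rfl : r = 2 := by omega
  obtain rfl : s = 1 := by omega
  norm_num at hR

/-- for all r > s ≥ 1 with gcd(r,s) = 1, there is no Fano polygon with
singularity content (0, {5 × 1/r(1,s)}). -/
theorem not_exists_fano_five_singularities (r s : ℤ) (hs : 1 ≤ s) (hsr : s < r)
    (hgcd : Int.gcd r s = 1) :
    ¬ ∃ v : ZMod 5 → ℤ × ℤ, IsFanoCCW v ∧ HasSingContent r s v := by
  rintro ⟨v, ⟨-, hprim, hpos, hconv⟩, hR, hM⟩
  have hr : 0 < r := by omega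
  have hcone : ∀ i, det2 (v i) (v (i + 1)) = r ∧ ConeCong r s (v i) (v (i + 1)) :=
    fun i => det2_and_coneCong hr (hpos i) (hM i)
  have e0 : ∀ i : ZMod 5, i + 4 + 1 = i := by decide
  have e1 : ∀ i : ZMod 5, i + 1 + 1 = i + 2 := by decide
  have e2 : ∀ i : ZMod 5, i + 2 + 1 = i + 3 := by decide
  have e3 : ∀ i : ZMod 5, i + 3 + 1 = i + 4 := by decide
  have hd0 : ∀ i, det2 (v i) (v (i + 1)) = r := fun i => (hcone i).1
  have hd1 : ∀ i, det2 (v (i + 1)) (v (i + 2)) = r := fun i => e1 i ▸ hd0 (i + 1)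
  have hd2 : ∀ i, det2 (v (i + 2)) (v (i + 3)) = r := fun i => e2 i ▸ hd0 (i + 2)
  have hd3 : ∀ i, det2 (v (i + 3)) (v (i + 4)) = r := fun i => e3 i ▸ hd0 (i + 3)
  have hd4 : ∀ i, det2 (v (i + 4)) (v i) = r := fun i => by
    have := hd0 (i + 4); rwa [e0] at this
  have hmult : ∀ i, ∃ a : ℤ, (v (i + 4)).1 + (v (i + 1)).1 = a * (v i).1 ∧
      (v (i + 4)).2 + (v (i + 1)).2 = a * (v i).2 := fun i => by
    refine exists_mult_of_det2_eq_zero (x := v (i + 4) + v (i + 1)) (hprim i) ?_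
    have h1 := hd0 i
    have h2 := hd4 i
    simp only [det2, Prod.fst_add, Prod.snd_add] at h1 h2 ⊢
    linarith
  choose a ha using hmult
  have f1 : ∀ i : ZMod 5, i + 1 + 4 = i := by decide
  have f2 : ∀ i : ZMod 5, i + 2 + 4 = i + 1 := by decide
  have f3 : ∀ i : ZMod 5, i + 3 + 4 = i + 2 := by decide
  have f4 : ∀ i : ZMod 5, i + 4 + 4 = i + 3 := by decide
  have ha1 := fun i => ha (i + 1)
  have ha2 := fun i => ha (i + 2)
  have ha3 := fun i => ha (i + 3)
  simp only [f1, f2, f3, e1, e2, e3] at ha1 ha2 ha3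
  have hle : ∀ i, a (i + 1) ≤ 1 := fun i =>
    mult_le_one hr (hd0 i) (ha1 i)
      (hconv i (i + 2) (by revert i; decide) (by revert i; decide))
  have hfr : ∀ i, a i * a (i + 1) = 1 - a (i + 3) := fun i =>
    frieze_relation hr (hd0 i) (hd3 i) (ha i) (ha1 i) (ha3 i)
  have hnn : ∀ i, 0 ≤ a (i + 2) + a (i + 4) := fun i => by
    have h4 := ha (i + 4)
    rw [f4, e0] at h4
    exact mult_add_nonneg hr (hd4 i) (hd0 i) (hd1 i) (ha2 i) h4
      (hconv i (i + 3) (by clear h4; revert i; decide) (by clear h4; revert i; decide))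
  have hfin : ∀ i, ¬ (a i = 0 ∧ a (i + 1) = 0 ∧ a (i + 2) = 1) := fun i habc => by
    have c2 := (hcone (i + 2)).2
    have c3 := (hcone (i + 3)).2
    rw [e2] at c2
    rw [e3] at c3
    exact false_of_mults hs hsr hgcd hR (hprim i) (hprim (i + 1)) (ha i) (ha1 i) (ha2 i) habc
      (hcone i).2 c2 c3
  rcases frieze_classification (hle 4) (hle 0) (hle 1) (hle 2) (hle 3)
    (hnn 3) (hnn 4) (hnn 0) (hnn 1) (hnn 2)
    (hfr 0) (hfr 1) (hfr 2) (hfr 3) (hfr 4) with h | h | h | h | h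
  · exact hfin 0 h
  · exact hfin 1 h
  · exact hfin 2 h
  · exact hfin 3 h
  · exact hfin 4 h
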